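/- Let X be a measurable space and let Q and Q̃ be weighted evolution operators on X, each satisfying the minorization condition (with possibly different constants and reference probability measures), and let ν and ν̃ be their respective unique invariant probability measures (the fixed points of the associated nonlinear maps, i.e., ν(Qφ) = ν(Q1)ν(φ) and ν̃(Q̃φ) = ν̃(Q̃1)ν̃(φ) for all bounded measurable φ). Suppose T and U are positive linear operators on the bounded measurable functions on X for which there exists α > 0 such that α φ ≤ Uφ ≤ α⁻¹ φ and α φ ≤ Tφ ≤ α⁻¹ φ pointwise for every bounded measurable φ ≥ 0, and suppose (Q̃)ⁿ = T ∘ Qⁿ ∘ U for every n ≥ 1. Then for every bounded measurable function φ, ν̃(φ) = ν(Uφ) / ν(U1). -/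

import Mathlib

open MeasureTheory ProbabilityTheory

/-- The action of a weighted evolution operator given by a kernel `κ`:
`(Qφ)(q) = ∫ φ(q') κ(q, dq')`. -/
noncomputable def evolOp {X : Type*} [MeasurableSpace X] (κ : Kernel X X) (φ : X → ℝ) : X → ℝ :=
  fun q => ∫ q', φ q' ∂(κ q)

/-- Bounded measurable real-valued functions. -/
def BddMeas {X : Type*} [MeasurableSpace X] (φ : X → ℝ) : Prop :=
  Measurable φ ∧ ∃ C : ℝ, ∀ x, |φ x| ≤ C

/-- Minorization condition: `ε η(φ) ≤ (Qφ)(q) ≤ ε⁻¹ η(φ)` for all bounded measurable `φ ≥ 0`. -/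
def Minorizes {X : Type*} [MeasurableSpace X] (Q : (X → ℝ) → (X → ℝ)) (ε : ℝ)
    (η : Measure X) : Prop :=
  ∀ φ : X → ℝ, BddMeas φ → (∀ x, 0 ≤ φ x) → ∀ q,
    ε * ∫ x, φ x ∂η ≤ Q φ q ∧ Q φ q ≤ ε⁻¹ * ∫ x, φ x ∂η

/-- The discretized Feynman–Kac semigroup `Φ_n(μ)(φ) = μ(Qⁿφ)/μ(Qⁿ1)`. -/
noncomputable def FK {X : Type*} [MeasurableSpace X] (κ : Kernel X X) (μ : Measure X)
    (n : ℕ) (φ : X → ℝ) : ℝ :=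
  (∫ q, (evolOp κ)^[n] φ q ∂μ) / (∫ q, (evolOp κ)^[n] (fun _ => (1:ℝ)) q ∂μ)

/-- Fixed-point (stationarity) equation: `μ(Qφ) = μ(Q1)·μ(φ)` for all bounded measurable φ. -/
def FixedPt {X : Type*} [MeasurableSpace X] (κ : Kernel X X) (μ : Measure X) : Prop :=
  ∀ φ : X → ℝ, BddMeas φ →
    ∫ q, evolOp κ φ q ∂μ = (∫ q, evolOp κ (fun _ => (1:ℝ)) q ∂μ) * ∫ q, φ q ∂μ

/-! The lower and upper minorization bounds make each application of `Q` contract relative bounds: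
if `ν f = 0` and `|f| ≤ h`, then `|Q f| ≤ (1 - ε⁴) Q h`. Hence `Qⁿ f / Qⁿ h → ν f / ν h` uniformly
for every `h > 0`. Such a convergence of ratios, written without division, survives a positive
linear map and an integration. Taking `f = U φ` and `h = U 1` and applying `T`, it becomes
`ν̃(Q̃ⁿ φ) / ν̃(Q̃ⁿ 1) → ν(U φ) / ν(U 1)`, while the left-hand side equals `ν̃ φ` for every `n`. -/

section FeynmanKac

open Filter Topology

variable {X : Type*}

section RatioConvergence

variable {ι : Type*} {l : Filter ι} {u v : ι → X → ℝ} {c : ℝ}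

/-- Uniform convergence of the ratios `u i / v i` to the constant `c`, for `v i ≥ 0`. It is written
without division so that positive linear maps can be applied to both sides of the inequality. -/
def RatioTendstoUniformly (u v : ι → X → ℝ) (c : ℝ) (l : Filter ι) : Prop :=
  ∀ δ > (0 : ℝ), ∀ᶠ i in l, |u i - c • v i| ≤ δ • v i

theorem RatioTendstoUniformly.congr {u' v' : ι → X → ℝ} (huv : RatioTendstoUniformly u v c l)
    (hu : u =ᶠ[l] u') (hv : v =ᶠ[l] v') : RatioTendstoUniformly u' v' c l := fun δ hδ => by
  filter_upwards [huv δ hδ, hu, hv] with i hi hui hvi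
  rwa [← hui, ← hvi]

end RatioConvergence

variable [MeasurableSpace X]

section BoundedMeasurable

variable {f g : X → ℝ}

theorem bddMeas_const (c : ℝ) : BddMeas (fun _ : X => c) :=
  ⟨measurable_const, |c|, fun _ => le_rfl⟩

theorem BddMeas.const_smul (hf : BddMeas f) (c : ℝ) : BddMeas (c • f) := by
  obtain ⟨hf_meas, C, hC⟩ := hf
  refine ⟨hf_meas.const_smul c, |c| * C, fun x => ?_⟩
  rw [Pi.smul_apply, smul_eq_mul, abs_mul]
  gcongr
  exact hC x

theorem BddMeas.neg (hf : BddMeas f) : BddMeas (-f) := by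
  simpa using hf.const_smul (-1)

theorem BddMeas.sub (hf : BddMeas f) (hg : BddMeas g) : BddMeas (f - g) := by
  obtain ⟨hf_meas, C, hC⟩ := hf
  obtain ⟨hg_meas, D, hD⟩ := hg
  exact ⟨hf_meas.sub hg_meas, C + D, fun x => (abs_sub _ _).trans (add_le_add (hC x) (hD x))⟩

theorem BddMeas.integrable (hf : BddMeas f) (μ : Measure X) [IsFiniteMeasure μ] :
    Integrable f μ :=
  have ⟨hf_meas, C, hC⟩ := hf
  .of_bound hf_meas.aestronglyMeasurable C (.of_forall hC)

end BoundedMeasurable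

theorem integral_pos_of_pos {f : X → ℝ} {μ : Measure X} [NeZero μ] (hf : Integrable f μ)
    (hpos : ∀ x, 0 < f x) : 0 < ∫ x, f x ∂μ := by
  rw [integral_pos_iff_support_of_nonneg (fun x => (hpos x).le) hf,
    Function.support_eq_univ fun x => (hpos x).ne']
  exact NeZero.pos _

section EvolutionOperator

variable {f g : X → ℝ} (κ : Kernel X X)

theorem evolOp_smul (c : ℝ) (f : X → ℝ) : evolOp κ (c • f) = c • evolOp κ f :=
  funext fun _ => integral_const_mul c f

theorem iterate_evolOp_smul (n : ℕ) (c : ℝ) (f : X → ℝ) :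
    (evolOp κ)^[n] (c • f) = c • (evolOp κ)^[n] f :=
  Function.Commute.iterate_left (g := (c • ·)) (evolOp_smul κ c) n f

theorem iterate_evolOp_nonneg (hf : 0 ≤ f) (n : ℕ) : 0 ≤ (evolOp κ)^[n] f :=
  Function.Iterate.rec (0 ≤ ·) hf (fun _ hg _ => integral_nonneg hg) n

theorem evolOp_neg (f : X → ℝ) : evolOp κ (-f) = -evolOp κ f :=
  funext fun _ => integral_neg f

variable [IsFiniteKernel κ]

theorem evolOp_sub (hf : BddMeas f) (hg : BddMeas g) :
    evolOp κ (f - g) = evolOp κ f - evolOp κ g :=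
  funext fun q => integral_sub (hf.integrable (κ q)) (hg.integrable (κ q))

theorem bddMeas_evolOp (hf : BddMeas f) : BddMeas (evolOp κ f) := by
  obtain ⟨hf_meas, C, hC⟩ := hf
  refine ⟨hf_meas.stronglyMeasurable.integral_kernel.measurable, |C| * κ.bound.toReal,
    fun q => ?_⟩
  have hmass : (κ q).real Set.univ ≤ κ.bound.toReal :=
    ENNReal.toReal_mono κ.bound_ne_top (κ.measure_le_bound q Set.univ)
  calc |evolOp κ f q| ≤ |C| * (κ q).real Set.univ :=
        norm_integral_le_of_norm_le_const (f := f) (.of_forall fun x =>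
          (hC x).trans (le_abs_self C))
    _ ≤ |C| * κ.bound.toReal := by gcongr

theorem bddMeas_iterate_evolOp (hf : BddMeas f) (n : ℕ) : BddMeas ((evolOp κ)^[n] f) :=
  Function.Iterate.rec BddMeas hf (fun _ => bddMeas_evolOp κ) n

theorem iterate_evolOp_sub (hf : BddMeas f) (hg : BddMeas g) (n : ℕ) :
    (evolOp κ)^[n] (f - g) = (evolOp κ)^[n] f - (evolOp κ)^[n] g := by
  induction n with
  | zero => rfl
  | succ n ih =>
    simp only [Function.iterate_succ_apply', ih]
    exact evolOp_sub κ (bddMeas_iterate_evolOp κ hf n) (bddMeas_iterate_evolOp κ hg n)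

end EvolutionOperator

section FixedPoint

variable {κ : Kernel X X} [IsFiniteKernel κ] {ν : Measure X} {f : X → ℝ}

theorem FixedPt.integral_iterate (hν : FixedPt κ ν) (hf : BddMeas f) (n : ℕ) :
    ∫ x, (evolOp κ)^[n] f x ∂ν = (∫ x, evolOp κ (fun _ => 1) x ∂ν) ^ n * ∫ x, f x ∂ν := by
  induction n with
  | zero => simp
  | succ n ih =>
    simp only [Function.iterate_succ_apply']
    rw [hν _ (bddMeas_iterate_evolOp κ hf n), ih, pow_succ', mul_assoc]

theorem FixedPt.integral_iterate_one [IsProbabilityMeasure ν] (hν : FixedPt κ ν) (n : ℕ) :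
    ∫ x, (evolOp κ)^[n] (fun _ => 1) x ∂ν = (∫ x, evolOp κ (fun _ => 1) x ∂ν) ^ n := by
  simp [hν.integral_iterate (bddMeas_const 1)]

theorem FixedPt.FK_eq_integral [IsProbabilityMeasure ν] (hν : FixedPt κ ν)
    (hmass : ∫ x, evolOp κ (fun _ => 1) x ∂ν ≠ 0) (hf : BddMeas f) (n : ℕ) :
    FK κ ν n f = ∫ x, f x ∂ν := by
  rw [FK, hν.integral_iterate hf, hν.integral_iterate_one,
    mul_div_cancel_left₀ _ (pow_ne_zero n hmass)]

end FixedPoint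

section Minorization

variable {Q : (X → ℝ) → X → ℝ} {ε : ℝ} {η ν : Measure X} {g : X → ℝ}

theorem Minorizes.exists_pos_le [IsFiniteMeasure η] [NeZero η] (hmin : Minorizes Q ε η)
    (hε : 0 < ε) (hg : BddMeas g) (hg_pos : ∀ x, 0 < g x) : ∃ m > 0, ∀ x, m ≤ Q g x :=
  ⟨ε * ∫ x, g x ∂η, mul_pos hε (integral_pos_of_pos (hg.integrable η) hg_pos),
    fun x => (hmin g hg (fun y => (hg_pos y).le) x).1⟩

variable [IsProbabilityMeasure ν]

theorem Minorizes.sq_mul_integral_le (hmin : Minorizes Q ε η) (hε : 0 < ε) (hg : BddMeas g)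
    (hg_nonneg : 0 ≤ g) (hQg : Integrable (Q g) ν) (q : X) :
    ε ^ 2 * ∫ x, Q g x ∂ν ≤ Q g q := by
  have hQ := hmin g hg hg_nonneg
  have hupper : ∫ x, Q g x ∂ν ≤ ε⁻¹ * ∫ x, g x ∂η := by
    simpa using integral_mono hQg (integrable_const _) fun x => (hQ x).2
  calc ε ^ 2 * ∫ x, Q g x ∂ν ≤ ε ^ 2 * (ε⁻¹ * ∫ x, g x ∂η) := by gcongr
    _ = ε * ∫ x, g x ∂η := by field_simp
    _ ≤ Q g q := (hQ q).1

theorem Minorizes.sq_mul_le_integral (hmin : Minorizes Q ε η) (hε : 0 < ε) (hg : BddMeas g)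
    (hg_nonneg : 0 ≤ g) (hQg : Integrable (Q g) ν) (q : X) :
    ε ^ 2 * Q g q ≤ ∫ x, Q g x ∂ν := by
  have hQ := hmin g hg hg_nonneg
  have hlower : ε * ∫ x, g x ∂η ≤ ∫ x, Q g x ∂ν := by
    simpa using integral_mono (integrable_const _) hQg fun x => (hQ x).1
  calc ε ^ 2 * Q g q ≤ ε ^ 2 * (ε⁻¹ * ∫ x, g x ∂η) := by gcongr; exact (hQ q).2
    _ = ε * ∫ x, g x ∂η := by field_simp
    _ ≤ ∫ x, Q g x ∂ν := hlower

end Minorization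

section Contraction

variable {κ : Kernel X X} [IsFiniteKernel κ] {ε : ℝ} {η ν : Measure X} [IsProbabilityMeasure ν]
  {f h : X → ℝ}

theorem Minorizes.evolOp_le_smul_of_le (hmin : Minorizes (evolOp κ) ε η) (hε : 0 < ε)
    (hf : BddMeas f) (hh : BddMeas h) (hh_nonneg : 0 ≤ h) (hfh : f ≤ h)
    (hzero : ∫ x, evolOp κ f x ∂ν = 0) :
    evolOp κ f ≤ (1 - ε ^ 4) • evolOp κ h := by
  intro q
  have hQh := (bddMeas_evolOp κ hh).integrable ν
  have hgap : ε ^ 4 * evolOp κ h q ≤ evolOp κ h q - evolOp κ f q :=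
    calc ε ^ 4 * evolOp κ h q = ε ^ 2 * (ε ^ 2 * evolOp κ h q) := by ring
      _ ≤ ε ^ 2 * ∫ x, evolOp κ h x ∂ν := by
        gcongr
        exact hmin.sq_mul_le_integral hε hh hh_nonneg hQh q
      _ = ε ^ 2 * ∫ x, evolOp κ (h - f) x ∂ν := by
        rw [evolOp_sub κ hh hf, integral_sub' hQh ((bddMeas_evolOp κ hf).integrable ν), hzero,
          sub_zero]
      _ ≤ evolOp κ (h - f) q :=
        hmin.sq_mul_integral_le hε (hh.sub hf) (sub_nonneg.2 hfh)
          ((bddMeas_evolOp κ (hh.sub hf)).integrable ν) q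
      _ = evolOp κ h q - evolOp κ f q := congrFun (evolOp_sub κ hh hf) q
  simp only [Pi.smul_apply, smul_eq_mul]
  linarith

theorem Minorizes.abs_evolOp_le_smul (hmin : Minorizes (evolOp κ) ε η) (hε : 0 < ε)
    (hf : BddMeas f) (hh : BddMeas h) (hfh : |f| ≤ h) (hzero : ∫ x, evolOp κ f x ∂ν = 0) :
    |evolOp κ f| ≤ (1 - ε ^ 4) • evolOp κ h := by
  have hh_nonneg : 0 ≤ h := (abs_nonneg f).trans hfh
  have hzero_neg : ∫ x, evolOp κ (-f) x ∂ν = 0 := by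
    rw [evolOp_neg, integral_neg', hzero, neg_zero]
  rw [abs_le', ← evolOp_neg]
  exact ⟨hmin.evolOp_le_smul_of_le hε hf hh hh_nonneg ((le_abs_self f).trans hfh) hzero,
    hmin.evolOp_le_smul_of_le hε hf.neg hh hh_nonneg ((neg_le_abs f).trans hfh) hzero_neg⟩

theorem Minorizes.abs_iterate_evolOp_le_smul (hmin : Minorizes (evolOp κ) ε η) (hε : 0 < ε)
    (hν : FixedPt κ ν) (hf : BddMeas f) (hh : BddMeas h) (hfh : |f| ≤ h)
    (hzero : ∫ x, f x ∂ν = 0) (n : ℕ) :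
    |(evolOp κ)^[n] f| ≤ (1 - ε ^ 4) ^ n • (evolOp κ)^[n] h := by
  induction n with
  | zero => simpa using hfh
  | succ n ih =>
    have hzero_succ : ∫ x, evolOp κ ((evolOp κ)^[n] f) x ∂ν = 0 := by
      rw [hν _ (bddMeas_iterate_evolOp κ hf n), hν.integral_iterate hf, hzero, mul_zero, mul_zero]
    have hstep := hmin.abs_evolOp_le_smul hε (bddMeas_iterate_evolOp κ hf n)
      ((bddMeas_iterate_evolOp κ hh n).const_smul _) ih hzero_succ
    rw [evolOp_smul, smul_smul, ← pow_succ'] at hstep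
    simpa only [Function.iterate_succ_apply'] using hstep

end Contraction

section RatioTransfer

variable {ι : Type*} {l : Filter ι} {u v : ι → X → ℝ} {c : ℝ}

theorem abs_map_le_map_of_abs_le {T : (X → ℝ) →ₗ[ℝ] X → ℝ}
    (hT : ∀ f, BddMeas f → 0 ≤ f → 0 ≤ T f) {f h : X → ℝ} (hf : BddMeas f) (hh : BddMeas h)
    (hfh : |f| ≤ h) : |T f| ≤ T h := by
  have hsub := hT _ (hh.sub hf) (sub_nonneg.2 ((le_abs_self f).trans hfh))
  have hadd := hT _ (hh.sub hf.neg) (sub_nonneg.2 ((neg_le_abs f).trans hfh))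
  rw [map_sub, sub_nonneg] at hsub hadd
  exact abs_le'.2 ⟨hsub, map_neg T f ▸ hadd⟩

theorem RatioTendstoUniformly.map (huv : RatioTendstoUniformly u v c l)
    {T : (X → ℝ) →ₗ[ℝ] X → ℝ} (hT : ∀ f, BddMeas f → 0 ≤ f → 0 ≤ T f)
    (hu : ∀ i, BddMeas (u i)) (hv : ∀ i, BddMeas (v i)) :
    RatioTendstoUniformly (fun i => T (u i)) (fun i => T (v i)) c l := fun δ hδ =>
  (huv δ hδ).mono fun i hi => by
    simpa using abs_map_le_map_of_abs_le hT ((hu i).sub ((hv i).const_smul c))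
      ((hv i).const_smul δ) hi

theorem RatioTendstoUniformly.tendsto_integral_div {μ : Measure X}
    (huv : RatioTendstoUniformly u v c l) (hu : ∀ i, Integrable (u i) μ)
    (hv : ∀ i, Integrable (v i) μ) (hv_pos : ∀ i, 0 < ∫ x, v i x ∂μ) :
    Tendsto (fun i => (∫ x, u i x ∂μ) / ∫ x, v i x ∂μ) l (𝓝 c) := by
  refine Metric.tendsto_nhds.2 fun δ hδ => ?_
  filter_upwards [huv (δ / 2) (half_pos hδ)] with i hi
  have hint : |∫ x, u i x ∂μ - c * ∫ x, v i x ∂μ| ≤ δ / 2 * ∫ x, v i x ∂μ := by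
    have hnorm := norm_integral_le_of_norm_le (f := u i - c • v i) ((hv i).smul (δ / 2))
      (.of_forall hi)
    simpa [integral_sub (hu i) ((hv i).const_mul c), integral_const_mul] using hnorm
  calc dist ((∫ x, u i x ∂μ) / ∫ x, v i x ∂μ) c
      = |∫ x, u i x ∂μ - c * ∫ x, v i x ∂μ| / ∫ x, v i x ∂μ := by
        rw [Real.dist_eq, div_sub' (hv_pos i).ne', abs_div, abs_of_pos (hv_pos i), mul_comm c]
    _ ≤ δ / 2 := (div_le_iff₀ (hv_pos i)).2 hint
    _ < δ := half_lt_self hδ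

end RatioTransfer

section Ergodicity

variable {κ : Kernel X X} [IsFiniteKernel κ] {ε : ℝ} {η ν : Measure X} [IsFiniteMeasure η]
  [NeZero η] [IsProbabilityMeasure ν] {f h : X → ℝ}

theorem Minorizes.exists_abs_evolOp_le_smul (hmin : Minorizes (evolOp κ) ε η) (hε : 0 < ε)
    (hf : BddMeas f) (hh : BddMeas h) (hh_pos : ∀ x, 0 < h x) :
    ∃ a : ℝ, |evolOp κ f| ≤ a • evolOp κ h := by
  obtain ⟨m, hm, hmh⟩ := hmin.exists_pos_le hε hh hh_pos
  obtain ⟨-, C, hC⟩ := bddMeas_evolOp κ hf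
  refine ⟨|C| / m, fun x => ?_⟩
  calc |evolOp κ f x| ≤ |C| := (hC x).trans (le_abs_self C)
    _ = |C| / m * m := (div_mul_cancel₀ _ hm.ne').symm
    _ ≤ |C| / m * evolOp κ h x := by gcongr; exact hmh x

theorem Minorizes.ratioTendstoUniformly_iterate (hmin : Minorizes (evolOp κ) ε η)
    (hε : ε ∈ Set.Ioc 0 1) (hν : FixedPt κ ν) (hf : BddMeas f) (hh : BddMeas h)
    (hh_pos : ∀ x, 0 < h x) :
    RatioTendstoUniformly (fun n => (evolOp κ)^[n] f) (fun n => (evolOp κ)^[n] h)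
      ((∫ x, f x ∂ν) / ∫ x, h x ∂ν) atTop := by
  set c := (∫ x, f x ∂ν) / ∫ x, h x ∂ν
  have hfch : BddMeas (f - c • h) := hf.sub (hh.const_smul c)
  have hcentred : ∫ x, evolOp κ (f - c • h) x ∂ν = 0 := by
    rw [hν _ hfch, integral_sub' (hf.integrable ν) ((hh.const_smul c).integrable ν),
      show ∫ x, (c • h) x ∂ν = c * ∫ x, h x ∂ν from integral_const_mul c h,
      div_mul_cancel₀ _ (integral_pos_of_pos (hh.integrable ν) hh_pos).ne', sub_self, mul_zero]
  -- One step is spent on comparing `Q f` with `Q h`, as `h > 0` may have infimum zero.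
  obtain ⟨a, ha⟩ := hmin.exists_abs_evolOp_le_smul hε.1 hfch hh hh_pos
  have hrate : Tendsto (fun n => (1 - ε ^ 4) ^ n * a) atTop (𝓝 0) := by
    simpa using (tendsto_pow_atTop_nhds_zero_of_lt_one
      (sub_nonneg.2 (pow_le_one₀ hε.1.le hε.2)) (sub_lt_self 1 (pow_pos hε.1 4))).mul_const a
  intro δ hδ
  rw [← map_add_atTop_eq_nat 1, eventually_map]
  filter_upwards [hrate.eventually_le_const hδ] with n hn
  calc |(evolOp κ)^[n + 1] f - c • (evolOp κ)^[n + 1] h|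
      = |(evolOp κ)^[n] (evolOp κ (f - c • h))| := by
        rw [← Function.iterate_succ_apply, iterate_evolOp_sub κ hf (hh.const_smul c),
          iterate_evolOp_smul]
    _ ≤ (1 - ε ^ 4) ^ n • (evolOp κ)^[n] (a • evolOp κ h) :=
        hmin.abs_iterate_evolOp_le_smul hε.1 hν (bddMeas_evolOp κ hfch)
          ((bddMeas_evolOp κ hh).const_smul a) ha hcentred n
    _ = ((1 - ε ^ 4) ^ n * a) • (evolOp κ)^[n + 1] h := by
        rw [iterate_evolOp_smul, smul_smul, Function.iterate_succ_apply]
    _ ≤ δ • (evolOp κ)^[n + 1] h :=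
        smul_le_smul_of_nonneg_right hn (iterate_evolOp_nonneg κ (fun x => (hh_pos x).le) (n + 1))

end Ergodicity

theorem Minorizes.map_evolOp_pos {κ : Kernel X X} [IsFiniteKernel κ] {ε : ℝ} {η : Measure X}
    [IsFiniteMeasure η] [NeZero η] (hmin : Minorizes (evolOp κ) ε η) (hε : 0 < ε)
    {T : (X → ℝ) →ₗ[ℝ] X → ℝ} (hTpos : ∀ f, BddMeas f → 0 ≤ f → 0 ≤ T f)
    (hT_one : ∀ x, 0 < T (fun _ => 1) x) {h : X → ℝ} (hh : BddMeas h)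
    (hh_pos : ∀ x, 0 < h x) (x : X) : 0 < T (evolOp κ h) x := by
  obtain ⟨m, hm, hmh⟩ := hmin.exists_pos_le hε hh hh_pos
  have hdiff : 0 ≤ T (evolOp κ h - m • fun _ => 1) :=
    hTpos _ ((bddMeas_evolOp κ hh).sub ((bddMeas_const 1).const_smul m)) fun y => by
      simpa using hmh y
  rw [map_sub, map_smul, sub_nonneg] at hdiff
  exact (mul_pos hm (hT_one x)).trans_le (hdiff x)

theorem TU_lemma_general {κ κ' : Kernel X X} [IsFiniteKernel κ] [IsFiniteKernel κ']
    {ε : ℝ} (hε : ε ∈ Set.Ioc 0 1) {η : Measure X} [IsFiniteMeasure η] [NeZero η]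
    (hmin : Minorizes (evolOp κ) ε η)
    {ν ν' : Measure X} [IsProbabilityMeasure ν] [IsProbabilityMeasure ν']
    (hν : FixedPt κ ν) (hν' : FixedPt κ' ν') {T U : (X → ℝ) →ₗ[ℝ] X → ℝ}
    (hUmaps : ∀ f, BddMeas f → BddMeas (U f)) (hTpos : ∀ f, BddMeas f → 0 ≤ f → 0 ≤ T f)
    (hT_one : ∀ x, 0 < T (fun _ => 1) x) (hU_one : ∀ x, 0 < U (fun _ => 1) x)
    (hTU : ∀ n : ℕ, 1 ≤ n → ∀ f, BddMeas f → (evolOp κ')^[n] f = T ((evolOp κ)^[n] (U f)))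
    {φ : X → ℝ} (hφ : BddMeas φ) :
    ∫ x, φ x ∂ν' = (∫ x, U φ x ∂ν) / ∫ x, U (fun _ => 1) x ∂ν := by
  have h_one : BddMeas (fun _ : X => (1 : ℝ)) := bddMeas_const 1
  have hmass : 0 < ∫ x, evolOp κ' (fun _ => 1) x ∂ν' :=
    integral_pos_of_pos ((bddMeas_evolOp κ' h_one).integrable ν') fun x => by
      rw [show evolOp κ' _ = _ from hTU 1 le_rfl _ h_one]
      exact hmin.map_evolOp_pos hε.1 hTpos hT_one (hUmaps _ h_one) hU_one x
  have hTU_eventually {f : X → ℝ} (hf : BddMeas f) :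
      (fun n => T ((evolOp κ)^[n] (U f))) =ᶠ[atTop] fun n => (evolOp κ')^[n] f :=
    (eventually_ge_atTop 1).mono fun n hn => (hTU n hn f hf).symm
  have hratio := hmin.ratioTendstoUniformly_iterate hε hν (hUmaps φ hφ) (hUmaps _ h_one) hU_one
  have hratio' : RatioTendstoUniformly (fun n => (evolOp κ')^[n] φ)
      (fun n => (evolOp κ')^[n] fun _ => 1) ((∫ x, U φ x ∂ν) / ∫ x, U (fun _ => 1) x ∂ν) atTop :=
    (hratio.map hTpos (bddMeas_iterate_evolOp κ (hUmaps φ hφ))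
      (bddMeas_iterate_evolOp κ (hUmaps _ h_one))).congr (hTU_eventually hφ) (hTU_eventually h_one)
  have hFK : Tendsto (FK κ' ν' · φ) atTop (𝓝 ((∫ x, U φ x ∂ν) / ∫ x, U (fun _ => 1) x ∂ν)) :=
    hratio'.tendsto_integral_div (fun n => (bddMeas_iterate_evolOp κ' hφ n).integrable ν')
      (fun n => (bddMeas_iterate_evolOp κ' h_one n).integrable ν')
      fun n => (pow_pos hmass n).trans_eq (hν'.integral_iterate_one n).symm
  simp only [hν'.FK_eq_integral hmass.ne' hφ] at hFK
  exact tendsto_nhds_unique tendsto_const_nhds hFK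

end FeynmanKac

/-- TU lemma: if `Q̃ⁿ = T ∘ Qⁿ ∘ U` for all n ≥ 1, with T and U positive operators
bounded above and below by multiples of the identity on nonnegative functions, then the
invariant probability measures of the two Feynman–Kac schemes are related by
`ν̃(φ) = ν(Uφ)/ν(U1)`. -/
theorem TU_lemma
    {X : Type*} [MeasurableSpace X] (κ κ' : Kernel X X) [IsFiniteKernel κ] [IsFiniteKernel κ']
    (ε : ℝ) (hε : ε ∈ Set.Ioo (0:ℝ) 1) (η : Measure X) [IsProbabilityMeasure η]
    (hmin : Minorizes (evolOp κ) ε η)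
    (ε' : ℝ) (hε' : ε' ∈ Set.Ioo (0:ℝ) 1) (η' : Measure X) [IsProbabilityMeasure η']
    (hmin' : Minorizes (evolOp κ') ε' η')
    (ν ν' : Measure X) [IsProbabilityMeasure ν] [IsProbabilityMeasure ν']
    (hν : FixedPt κ ν) (hν' : FixedPt κ' ν')
    (T U : (X → ℝ) → (X → ℝ))
    (hTlin : IsLinearMap ℝ T) (hUlin : IsLinearMap ℝ U)
    (hTmaps : ∀ φ, BddMeas φ → BddMeas (T φ)) (hUmaps : ∀ φ, BddMeas φ → BddMeas (U φ))
    (hTpos : ∀ φ, BddMeas φ → (∀ x, 0 ≤ φ x) → ∀ x, 0 ≤ T φ x)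
    (hUpos : ∀ φ, BddMeas φ → (∀ x, 0 ≤ φ x) → ∀ x, 0 ≤ U φ x)
    (α : ℝ) (hα : 0 < α)
    (hTbd : ∀ φ, BddMeas φ → (∀ x, 0 ≤ φ x) → ∀ x, α * φ x ≤ T φ x ∧ T φ x ≤ α⁻¹ * φ x)
    (hUbd : ∀ φ, BddMeas φ → (∀ x, 0 ≤ φ x) → ∀ x, α * φ x ≤ U φ x ∧ U φ x ≤ α⁻¹ * φ x)
    (hTU : ∀ n : ℕ, 1 ≤ n → ∀ φ, BddMeas φ → ∀ x,
      (evolOp κ')^[n] φ x = T ((evolOp κ)^[n] (U φ)) x)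
    (φ : X → ℝ) (hφ : BddMeas φ) :
    ∫ x, φ x ∂ν' = (∫ x, U φ x ∂ν) / (∫ x, U (fun _ => (1:ℝ)) x ∂ν) := by
  exact TU_lemma_general (T := hTlin.mk' T) (U := hUlin.mk' U) ⟨hε.1, hε.2.le⟩ hmin hν hν' hUmaps
    hTpos
    (fun x => (mul_pos hα one_pos).trans_le (hTbd _ (bddMeas_const 1) (fun _ => zero_le_one) x).1)
    (fun x => (mul_pos hα one_pos).trans_le (hUbd _ (bddMeas_const 1) (fun _ => zero_le_one) x).1)
    (fun n hn f hf => funext (hTU n hn f hf)) hφ
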